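/- Assume m ≥ n+1 and that f_1,…,f_m satisfy the SNC hypothesis. Let Der(A) = {θ ∈ R^n : f_i divides Σ_{j=1}^n θ_j·∂f_i/∂x_j in R, for all i} be the R-module of derivations tangent to the arrangement, let Ω¹ = Hom_R(Der(A), R) be its R-linear dual, and for p ≥ 0 let Ω^p = ⋀^p_R Ω¹ be the p-th exterior power. Then for every 0 ≤ p ≤ n, the R-module Ω^p has projective dimension at most p; that is, every SNC arrangement of hypersurfaces is tame. -/

import Mathlib

open MvPolynomial

noncomputable section

/-- The polynomial ring `R = ℂ[x_1,…,x_n]`. -/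
abbrev Rp (n : ℕ) := MvPolynomial (Fin n) ℂ

/-- The polynomial ring `S = ℂ[s_1,…,s_m,x_1,…,x_n]`; `Sum.inl i ↦ s_i`, `Sum.inr j ↦ x_j`. -/
abbrev Sp (n m : ℕ) := MvPolynomial (Fin m ⊕ Fin n) ℂ

/-- The inclusion `R ⊆ S`. -/
def toS (n m : ℕ) : Rp n →ₐ[ℂ] Sp n m := rename Sum.inr

/-- Column index set for `Q_{∖1}`: diagonal columns `2,…,m` and the `n` Jacobian columns. -/
abbrev Col (n m : ℕ) := {k : Fin m // (k : ℕ) ≠ 0} ⊕ Fin n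

/-- The SNC (strict normal crossing) hypothesis, via the Jacobian criterion. -/
def SNC (n m : ℕ) (f : Fin m → Rp n) : Prop :=
  (∀ i, Irreducible (f i)) ∧
  ∀ I : Finset (Fin m), 1 ≤ I.card → I.card ≤ n →
    ∀ p : Fin n → ℂ, p ≠ 0 → (∀ i ∈ I, eval p (f i) = 0) →
      (Matrix.of fun (i : I) (j : Fin n) => eval p (pderiv j (f i.1))).rank = I.card

/-- The matrix `Q = (diag(f_1,…,f_m) | J_f)`. -/
def Qmat (n m : ℕ) (f : Fin m → Rp n) : Matrix (Fin m) (Fin m ⊕ Fin n) (Rp n) :=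
  Matrix.of fun i => Sum.elim (fun k => if i = k then f i else 0) (fun j => pderiv j (f i))

/-- The matrix `Q_{∖1}`, obtained from `Q` by deleting the first column. -/
def Q1 (n m : ℕ) (f : Fin m → Rp n) : Matrix (Fin m) (Col n m) (Rp n) :=
  Matrix.of fun i => Sum.elim (fun k => if i = (k : Fin m) then f i else 0)
    (fun j => pderiv j (f i))

/-- The matrix `Q^s_{∖1}`: `Q_{∖1}` (over `S`) with the row `(s_2,…,s_m,0,…,0)` appended. -/
def Qs1 (n m : ℕ) (f : Fin m → Rp n) : Matrix (Option (Fin m)) (Col n m) (Sp n m) :=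
  Matrix.of fun i? c =>
    i?.elim (Sum.elim (fun k : {k : Fin m // (k : ℕ) ≠ 0} => (X (Sum.inl (k : Fin m)) : Sp n m)) (fun _ : Fin n => (0 : Sp n m)) c)
      (fun i => toS n m (Q1 n m f i c))

/-- The ideal generated by all `k × k` minors of a matrix. -/
def minorsIdeal {A : Type*} [CommRing A] {ι κ : Type*} (k : ℕ) (M : Matrix ι κ A) : Ideal A :=
  Ideal.span {x | ∃ r : Fin k → ι, ∃ c : Fin k → κ,
    Function.Injective r ∧ Function.Injective c ∧ x = (M.submatrix r c).det}

/-- `h_j = Σ_i s_i·(Π_{k≠i} f_k)·∂f_i/∂x_j`. -/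
def hpoly (n m : ℕ) (f : Fin m → Rp n) (j : Fin n) : Sp n m :=
  ∑ i, X (Sum.inl i) * toS n m (((Finset.univ.erase i).prod f) * pderiv j (f i))

/-- The linear form `Σ_i d_i·s_i`. -/
def linForm (n m : ℕ) (d : Fin m → ℕ) : Sp n m := ∑ i, (d i : Sp n m) * X (Sum.inl i)

/-- The likelihood ideal `I_A`: contraction to `S` of the ideal `⟨h_1,…,h_n⟩` of `S_f`. -/
def IA (n m : ℕ) (f : Fin m → Rp n) : Ideal (Sp n m) :=
  (Ideal.span (Set.range fun j =>
      algebraMap (Sp n m) (Localization.Away (toS n m (∏ i, f i))) (hpoly n m f j))).comap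
    (algebraMap (Sp n m) (Localization.Away (toS n m (∏ i, f i))))

/-- The module `Der(A)` of derivations tangent to the arrangement. -/
def DerA (n m : ℕ) (f : Fin m → Rp n) : Submodule (Rp n) (Fin n → Rp n) where
  carrier := {θ | ∀ i, f i ∣ ∑ j, θ j * pderiv j (f i)}
  add_mem' := by
    intro a b ha hb i
    have h := dvd_add (ha i) (hb i)
    simpa [Pi.add_apply, add_mul, Finset.sum_add_distrib] using h
  zero_mem' := by
    intro i
    simp
  smul_mem' := by
    intro c a ha i
    have h := (ha i).mul_left c
    simpa [Pi.smul_apply, smul_eq_mul, Finset.mul_sum, mul_assoc] using h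

/-!
Up to projecting away the first `m` coordinates, `Der(A)` is the kernel of `Q : R^(m+n) → R^m`. By
Euler's identity the Jacobian criterion makes `Q` a split surjection away from the origin, so some
power of each variable kills the obstruction to splitting `Q`.

If `n ≤ 2`, Hilbert's syzygy theorem makes the second syzygy module `ker Q` projective.

If `n ≥ 3`, adjoin one relation at a time to pass from `R^(m+n)` to the cokernel `C` of `Q^T`. Each
step divides a module `M` by an element `v` that is unimodular away from the origin, and the
sequence `0 → ⋀^p (M/v) → ⋀^(p+1) M → ⋀^(p+1) (M/v) → 0`, with `v ∧ ·` on the left, carries the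
bound `pd ⋀^p ≤ p` from `M` to `M/v`: its left map is injective because it is so away from the
origin, while `⋀^p (M/v)` has depth at least `n - p > 0`. Finally `C → (ker Q)^*` is an isomorphism
away from the origin, hence an isomorphism, because `C` has depth at least `n - 1 ≥ 2`.
-/

section Resolutions

open CategoryTheory Limits

variable {C : Type*} [Category C] [Abelian C]

theorem exact_epi_comp_f {S : ShortComplex C} (hS : S.Exact) {A : C} (e : A ⟶ S.X₁) [Epi e] :
    (ShortComplex.mk (e ≫ S.f) S.g (by simp)).Exact := by
  let α : ShortComplex.mk (e ≫ S.f) S.g (by simp) ⟶ S := { τ₁ := e, τ₂ := 𝟙 _, τ₃ := 𝟙 _ }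
  have : Epi α.τ₁ := inferInstanceAs (Epi e)
  have : IsIso α.τ₂ := inferInstanceAs (IsIso (𝟙 _))
  have : Mono α.τ₃ := inferInstanceAs (Mono (𝟙 _))
  exact (ShortComplex.exact_iff_of_epi_of_isIso_of_mono α).2 hS

theorem exact_g_comp_mono {S : ShortComplex C} (hS : S.Exact) {B : C} (i : S.X₃ ⟶ B) [Mono i] :
    (ShortComplex.mk S.f (S.g ≫ i) (by simp)).Exact := by
  let α : S ⟶ ShortComplex.mk S.f (S.g ≫ i) (by simp) := { τ₁ := 𝟙 _, τ₂ := 𝟙 _, τ₃ := i }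
  have : Epi α.τ₁ := inferInstanceAs (Epi (𝟙 _))
  have : IsIso α.τ₂ := inferInstanceAs (IsIso (𝟙 _))
  have : Mono α.τ₃ := inferInstanceAs (Mono i)
  exact (ShortComplex.exact_iff_of_epi_of_isIso_of_mono α).1 hS

/-- The projective resolution of `Z` given by an acyclic complex of projectives `K` together with
an augmentation `ε`. -/
def resolutionOfAugmentation (K : ChainComplex C ℕ) [∀ k, Projective (K.X k)] {Z : C}
    (ε : K.X 0 ⟶ Z) [Epi ε] (w : K.d 1 0 ≫ ε = 0) (h₀ : (ShortComplex.mk _ ε w).Exact)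
    (h : ∀ k, K.ExactAt (k + 1)) : ProjectiveResolution Z where
  complex := K
  π := (ChainComplex.toSingle₀Equiv K Z).symm ⟨ε, w⟩
  quasiIso := ⟨fun k => by
    cases k with
    | zero =>
      have hε : ((ChainComplex.toSingle₀Equiv K Z).symm ⟨ε, w⟩).f 0 = ε := by simp
      rw [ChainComplex.quasiIsoAt₀_iff,
        ShortComplex.quasiIso_iff_of_zeros' _ (K.shape _ _ (by simp)) rfl rfl]
      refine (ShortComplex.exact_and_epi_g_iff_of_iso ?_).2 ⟨h₀, inferInstance⟩
      exact ShortComplex.isoMk (Iso.refl _) (Iso.refl _) (Iso.refl _)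
        ((Category.id_comp _).trans (Category.comp_id _).symm)
        ((Category.id_comp _).trans (hε.symm.trans (Category.comp_id _).symm))
    | succ k =>
      rw [quasiIsoAt_iff_exactAt' _ _ (ChainComplex.exactAt_succ_single_obj _ _)]
      exact h k⟩

/-- The augmentation of a projective resolution, with source the degree-zero term itself and
target the resolved object itself. -/
def augmentation {Z : C} (P : ProjectiveResolution Z) : P.complex.X 0 ⟶ Z := P.π.f 0

instance {Z : C} (P : ProjectiveResolution Z) : Epi (augmentation P) :=
  inferInstanceAs (Epi (P.π.f 0))

theorem d_comp_augmentation {Z : C} (P : ProjectiveResolution Z) :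
    P.complex.d 1 0 ≫ augmentation P = 0 :=
  P.complex_d_comp_π_f_zero

theorem exact_augmentation {Z : C} (P : ProjectiveResolution Z) :
    (ShortComplex.mk _ _ (d_comp_augmentation P)).Exact :=
  P.exact₀

/-- The complex underlying a projective resolution of `X₁`, continued by the middle term of a short
complex `X₁ ⟶ X₂ ⟶ X₃`. -/
def spliceComplex {S : ShortComplex C} (P : ProjectiveResolution S.X₁) : ChainComplex C ℕ :=
  ChainComplex.augment P.complex (augmentation P ≫ S.f)
    (by rw [← Category.assoc, d_comp_augmentation, zero_comp])

theorem spliceComplex_exactAt_succ {S : ShortComplex C} [Mono S.f]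
    (P : ProjectiveResolution S.X₁) (k : ℕ) : (spliceComplex P).ExactAt (k + 1) := by
  rw [HomologicalComplex.exactAt_iff' _ (k + 2) (k + 1) k (by simp) (by simp)]
  cases k with
  | zero => exact exact_g_comp_mono (exact_augmentation P) S.f
  | succ k => exact P.exact_succ k

instance {S : ShortComplex C} [Projective S.X₂] (P : ProjectiveResolution S.X₁) :
    ∀ k, Projective ((spliceComplex P).X k)
  | 0 => ‹Projective S.X₂›
  | k + 1 => P.projective k

/-- A resolution of `X₁` spliced with a short exact sequence `0 ⟶ X₁ ⟶ X₂ ⟶ X₃ ⟶ 0` with projective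
middle term is a resolution of `X₃`. -/
def spliceResolution {S : ShortComplex C} (hS : S.ShortExact) [Projective S.X₂]
    (P : ProjectiveResolution S.X₁) : ProjectiveResolution S.X₃ :=
  have := hS.mono_f
  have : Epi (X := (spliceComplex P).X 0) S.g := hS.epi_g
  have w : (augmentation P ≫ S.f) ≫ S.g = 0 := by simp
  resolutionOfAugmentation (spliceComplex P) S.g w
    (exact_epi_comp_f hS.exact (augmentation P)) (spliceComplex_exactAt_succ P)

theorem exists_shortExact_projective [EnoughProjectives C] (Z : C) :
    ∃ (X P : C) (f : X ⟶ P) (g : P ⟶ Z) (w : f ≫ g = 0), Projective P ∧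
      (ShortComplex.mk f g w).ShortExact :=
  ⟨_, _, kernel.ι (Projective.π Z), Projective.π Z, kernel.condition _, inferInstance,
    { exact := ShortComplex.exact_kernel _ }⟩

theorem exists_projectiveResolution_of_hasProjectiveDimensionLE [EnoughProjectives C] (p : ℕ)
    (Z : C) (hZ : HasProjectiveDimensionLE Z p) :
    ∃ P : ProjectiveResolution Z, ∀ k, p < k → IsZero (P.complex.X k) := by
  induction p generalizing Z with
  | zero =>
    have : Projective Z := projective_iff_hasProjectiveDimensionLT_one.2 hZ
    exact ⟨ProjectiveResolution.self Z, fun k hk =>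
      HomologicalComplex.isZero_single_obj_X _ _ _ _ hk.ne'⟩
  | succ p ih =>
    obtain ⟨X, Y, f, g, w, hY, hS⟩ := exists_shortExact_projective Z
    obtain ⟨P, hP⟩ := ih X ((hS.hasProjectiveDimensionLT_X₃_iff p hY).1 hZ)
    refine ⟨spliceResolution hS P, fun k hk => ?_⟩
    obtain ⟨k, rfl⟩ := Nat.exists_eq_add_one.2 (Nat.zero_lt_of_lt hk)
    exact hP k (by omega)

end Resolutions

section ProjectiveDimension

open CategoryTheory TensorProduct

universe u

variable {R : Type u} [CommRing R]

theorem hasProjectiveDimensionLE_zero_iff (M : ModuleCat.{u} R) :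
    HasProjectiveDimensionLE M 0 ↔ Module.Projective R M := by
  rw [IsProjective.iff_projective, projective_iff_hasProjectiveDimensionLT_one]

theorem hasProjectiveDimensionLE_succ_iff {K F M : Type u} [AddCommGroup K] [Module R K]
    [AddCommGroup F] [Module R F] [Module.Projective R F] [AddCommGroup M] [Module R M]
    {φ : K →ₗ[R] F} {π : F →ₗ[R] M} (hφ : Function.Injective φ) (hφπ : Function.Exact φ π)
    (hπ : Function.Surjective π) (d : ℕ) :
    HasProjectiveDimensionLE (ModuleCat.of R M) (d + 1) ↔
      HasProjectiveDimensionLE (ModuleCat.of R K) d :=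
  have hS : (ModuleCat.shortComplexOfCompEqZero φ π hφπ.linearMap_comp_eq_zero).ShortExact :=
    ModuleCat.shortComplex_shortExact _ hφπ hφ hπ
  hS.hasProjectiveDimensionLT_X₃_iff d ((IsProjective.iff_projective F).1 inferInstance)

theorem hasProjectiveDimensionLE_baseChange (S : Type u) [CommRing S] [Algebra R S]
    [Module.Flat R S] (d : ℕ) (M : ModuleCat.{u} R) (hM : HasProjectiveDimensionLE M d) :
    HasProjectiveDimensionLE (ModuleCat.of S (S ⊗[R] M)) d := by
  induction d generalizing M with
  | zero =>
    rw [hasProjectiveDimensionLE_zero_iff] at hM ⊢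
    exact inferInstanceAs (Module.Projective S (S ⊗[R] M))
  | succ d ih =>
    obtain ⟨F, _, _, _, π, hπ⟩ : ∃ (F : Type u) (_ : AddCommGroup F) (_ : Module R F)
        (_ : Module.Projective R F) (π : F →ₗ[R] M), Function.Surjective π :=
      ⟨M →₀ R, inferInstance, inferInstance, inferInstance, _,
        Finsupp.linearCombination_id_surjective R M⟩
    have hexact := LinearMap.exact_subtype_ker_map π
    have hinj := (LinearMap.ker π).injective_subtype
    rw [hasProjectiveDimensionLE_succ_iff (φ := (LinearMap.ker π).subtype.baseChange S)
      (π := π.baseChange S)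
      (Module.Flat.lTensor_preserves_injective_linearMap _ hinj)
      (Module.Flat.lTensor_exact S hexact) (LinearMap.lTensor_surjective S hπ)]
    exact ih _ ((hasProjectiveDimensionLE_succ_iff hinj hexact hπ d).1 hM)

end ProjectiveDimension

section PolynomialModule

open TensorProduct
open scoped Polynomial

variable {R : Type*} [CommRing R] (M : Type*) [AddCommGroup M] [Module R M] [Module R[X] M]
  [IsScalarTower R R[X] M]

/-- Multiplication by `X ⊗ 1 - 1 ⊗ X` on `R[X] ⊗ M`, for an `R[X]`-module `M`. -/
def tensorXSub : R[X] ⊗[R] M →ₗ[R[X]] R[X] ⊗[R] M :=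
  (Polynomial.X : R[X]) • LinearMap.id -
    (Algebra.lsmul R R M (Polynomial.X : R[X])).baseChange R[X]

/-- The action map `R[X] ⊗ M → M` of an `R[X]`-module `M`. -/
def tensorAction : R[X] ⊗[R] M →ₗ[R[X]] M :=
  (LinearMap.id : M →ₗ[R] M).liftBaseChange R[X]

variable {M}

@[simp]
theorem tensorXSub_tmul (P : R[X]) (x : M) :
    tensorXSub M (P ⊗ₜ x) = (Polynomial.X * P) ⊗ₜ x - P ⊗ₜ ((Polynomial.X : R[X]) • x) := by
  simp [tensorXSub, TensorProduct.smul_tmul']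

@[simp]
theorem tensorAction_tmul (P : R[X]) (x : M) : tensorAction M (P ⊗ₜ x) = P • x := by
  simp [tensorAction]

theorem tensorAction_surjective : Function.Surjective (tensorAction (R := R) M) :=
  fun x => ⟨1 ⊗ₜ x, by simp⟩

theorem tmul_sub_one_tmul_smul_mem_range_tensorXSub (P : R[X]) (x : M) :
    P ⊗ₜ x - 1 ⊗ₜ (P • x) ∈ LinearMap.range (tensorXSub (R := R) M) := by
  induction P using Polynomial.induction_on generalizing x with
  | C r => simp [← Polynomial.algebraMap_eq, Algebra.algebraMap_eq_smul_one, smul_tmul]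
  | add P Q hP hQ =>
    convert add_mem (hP x) (hQ x) using 1
    simp only [add_tmul, add_smul, tmul_add]
    abel
  | monomial k r ih =>
    convert add_mem (LinearMap.mem_range_self (tensorXSub M) ((.C r * .X ^ k) ⊗ₜ x))
      (ih ((Polynomial.X : R[X]) • x)) using 1
    rw [tensorXSub_tmul, sub_add_sub_cancel, smul_smul, mul_left_comm, mul_assoc, ← pow_succ,
      ← pow_succ']

theorem exact_tensorXSub_tensorAction :
    Function.Exact (tensorXSub (R := R) M) (tensorAction M) := by
  have sub_mem_range (z : R[X] ⊗[R] M) :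
      z - 1 ⊗ₜ tensorAction M z ∈ LinearMap.range (tensorXSub (R := R) M) := by
    induction z with
    | zero => simp
    | tmul P x => simpa using tmul_sub_one_tmul_smul_mem_range_tensorXSub P x
    | add z w hz hw =>
      convert add_mem hz hw using 1
      simp only [map_add, tmul_add]
      abel
  refine LinearMap.exact_iff.2 (le_antisymm (fun z hz => ?_) ?_)
  · simpa [LinearMap.mem_ker.1 hz] using sub_mem_range z
  · rw [LinearMap.range_le_ker_iff]
    ext x
    simp

theorem tensorXSub_injective : Function.Injective (tensorXSub (R := R) M) := by
  let c := TensorProduct.equivFinsuppOfBasisLeft (N := M) (Polynomial.basisMonomials R)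
  have repr_eq_coeff (P : R[X]) (j : ℕ) : (Polynomial.basisMonomials R).repr P j = P.coeff j := rfl
  have coeff_tensorXSub (z : R[X] ⊗[R] M) (k : ℕ) :
      c (tensorXSub M z) (k + 1) = c z k - (Polynomial.X : R[X]) • c z (k + 1) := by
    induction z with
    | zero => simp
    | tmul P x =>
      rw [tensorXSub_tmul, map_sub, Finsupp.sub_apply]
      simp only [c, TensorProduct.equivFinsuppOfBasisLeft_apply_tmul_apply, repr_eq_coeff,
        Polynomial.coeff_X_mul]
      rw [smul_comm (P.coeff (k + 1))]
    | add z w hz hw =>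
      simp only [map_add, Finsupp.add_apply, hz, hw, smul_add]
      abel
  rw [injective_iff_map_eq_zero]
  intro z hz
  have coeff_eq (k j : ℕ) : c z k = (Polynomial.X : R[X]) ^ j • c z (k + j) := by
    induction j with
    | zero => simp
    | succ j ih =>
      have := coeff_tensorXSub z (k + j)
      rw [hz, map_zero, Finsupp.zero_apply, eq_comm, sub_eq_zero] at this
      rw [ih, this, smul_smul, pow_succ, add_assoc]
  obtain ⟨N, hN⟩ := (c z).support.exists_nat_subset_range
  rw [← c.map_eq_zero_iff]
  ext k
  have hk : k + N ∉ (c z).support := fun h => by simpa using hN h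
  rw [coeff_eq k N, Finsupp.notMem_support_iff.1 hk, smul_zero, Finsupp.zero_apply]

end PolynomialModule

section HilbertSyzygy

open CategoryTheory TensorProduct
open scoped Polynomial

universe u

theorem hasProjectiveDimensionLE_polynomial {R : Type u} [CommRing R] {d : ℕ}
    (hR : ∀ M : ModuleCat.{u} R, HasProjectiveDimensionLE M d) (M : ModuleCat.{u} R[X]) :
    HasProjectiveDimensionLE M (d + 1) := by
  let : Module R M := Module.compHom M (Polynomial.C : R →+* R[X])
  have : IsScalarTower R R[X] M := ⟨fun r P x => by
    rw [Algebra.smul_def, mul_smul]; rfl⟩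
  have hS : (ModuleCat.shortComplexOfCompEqZero (tensorXSub (R := R) M) (tensorAction M)
      exact_tensorXSub_tensorAction.linearMap_comp_eq_zero).ShortExact :=
    ModuleCat.shortComplex_shortExact _ exact_tensorXSub_tensorAction tensorXSub_injective
      tensorAction_surjective
  have htensor : HasProjectiveDimensionLE (ModuleCat.of R[X] (R[X] ⊗[R] M)) d :=
    hasProjectiveDimensionLE_baseChange R[X] d (ModuleCat.of R M) (hR _)
  exact hS.hasProjectiveDimensionLT_X₃ (d + 1) htensor
    (hasProjectiveDimensionLT_of_ge _ (d + 1) (d + 2) (by omega))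

theorem hasProjectiveDimensionLE_of_ringEquiv {R S : Type u} [CommRing R] [CommRing S]
    (e : R ≃+* S) {d : ℕ} (hR : ∀ M : ModuleCat.{u} R, HasProjectiveDimensionLE M d)
    (M : ModuleCat.{u} S) : HasProjectiveDimensionLE M d := by
  have := RingHomInvPair.of_ringEquiv e
  have := RingHomInvPair.of_ringEquiv e.symm
  let : Module R M := Module.compHom M (e : R →+* S)
  have := hR (ModuleCat.of R M)
  exact ModuleCat.hasProjectiveDimensionLE_of_semiLinearEquiv e
    (M := ModuleCat.of R M) (N := M)
    { AddEquiv.refl M with map_smul' := fun r x => rfl } d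

theorem hasProjectiveDimensionLE_mvPolynomial (k : Type u) [Field k] (n : ℕ)
    (M : ModuleCat.{u} (MvPolynomial (Fin n) k)) : HasProjectiveDimensionLE M n := by
  induction n with
  | zero =>
    refine hasProjectiveDimensionLE_of_ringEquiv (MvPolynomial.isEmptyRingEquiv k (Fin 0)).symm
      (fun M => ?_) M
    rw [hasProjectiveDimensionLE_zero_iff]
    infer_instance
  | succ n ih =>
    exact hasProjectiveDimensionLE_of_ringEquiv (MvPolynomial.finSuccEquiv k n).symm.toRingEquiv
      (hasProjectiveDimensionLE_polynomial ih) M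

end HilbertSyzygy

section Depth

open CategoryTheory Abelian

universe u

variable {R : Type u} [CommRing R]

/-- `x` is killed by a power of every element of `I`. -/
def IsPowTorsion (I : Ideal R) {M : Type*} [AddCommGroup M] [Module R M] (x : M) : Prop :=
  I ≤ (Ideal.torsionOf R M x).radical

/-- `M` has depth at least `d` along `I`, in the form given by Rees' theorem: `Ext^i(N, M) = 0` for
`i < d` and every finite module `N` supported on `V(I)`. -/
def DepthGE (I : Ideal R) (d : ℕ) (M : ModuleCat.{u} R) : Prop :=
  ∀ N : ModuleCat.{u} R, Module.Finite R N → Module.support R N ⊆ PrimeSpectrum.zeroLocus I →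
    ∀ i < d, Subsingleton (Ext N M i)

variable {I : Ideal R}

theorem IsPowTorsion.map {M N : Type*} [AddCommGroup M] [Module R M] [AddCommGroup N] [Module R N]
    {x : M} (hx : IsPowTorsion I x) (φ : M →ₗ[R] N) : IsPowTorsion I (φ x) :=
  hx.trans <| Ideal.radical_mono fun r hr => by
    rw [Ideal.mem_torsionOf_iff] at hr ⊢
    rw [← map_smul, hr, map_zero]

theorem IsPowTorsion.support_span_subset {M : Type*} [AddCommGroup M] [Module R M] {x : M}
    (hx : IsPowTorsion I x) :
    Module.support R (Submodule.span R {x}) ⊆ PrimeSpectrum.zeroLocus (I : Set R) := by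
  rw [Module.support_eq_zeroLocus, PrimeSpectrum.zeroLocus_subset_zeroLocus_iff]
  refine hx.trans (Ideal.radical_mono ?_)
  rw [← Ideal.annihilator_span_singleton_eq_torsionOf]

theorem DepthGE.mono {d e : ℕ} {M : ModuleCat.{u} R} (h : d ≤ e) (hM : DepthGE I e M) :
    DepthGE I d M :=
  fun N hN hsupp i hi => hM N hN hsupp i (hi.trans_le h)

theorem depthGE_self [IsNoetherianRing R] (hI : I ≠ ⊤) {rs : List R} (hmem : ∀ r ∈ rs, r ∈ I)
    (hrs : RingTheory.Sequence.IsRegular R rs) : DepthGE I rs.length (ModuleCat.of R R) :=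
  fun N _ hsupp => ModuleCat.subsingleton_ext_of_exists_isRegular I N hsupp (ModuleCat.of R R)
    (by simpa using hI.lt_top) rs hmem hrs

theorem subsingleton_ext_of_sum_comp_eq_id {C : Type*} [Category C] [Abelian C] [HasExt C]
    {X Y Z : C} {ι : Type*} [Fintype ι] {a : ι → (Y ⟶ Z)} {b : ι → (Z ⟶ Y)}
    (hab : ∑ l, a l ≫ b l = 𝟙 Y) (i : ℕ) [Subsingleton (Ext X Z i)] :
    Subsingleton (Ext X Y i) := by
  refine subsingleton_of_forall_eq 0 fun x => ?_
  rw [← Ext.comp_mk₀_id x, ← hab, Ext.mk₀_sum, Ext.comp_sum]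
  refine Finset.sum_eq_zero fun l _ => ?_
  rw [← Ext.mk₀_comp_mk₀, ← Ext.comp_assoc_of_second_deg_zero,
    Subsingleton.elim (x.comp (Ext.mk₀ (a l)) _) 0, Ext.zero_comp]

theorem DepthGE.of_projective {d : ℕ} (hR : DepthGE I d (ModuleCat.of R R)) (M : ModuleCat.{u} R)
    [Module.Finite R M] [Module.Projective R M] : DepthGE I d M := by
  intro N hN hsupp i hi
  have := hR N hN hsupp i hi
  obtain ⟨k, f, g, -, -, hfg⟩ := Module.Finite.exists_comp_eq_id_of_projective R M
  refine subsingleton_ext_of_sum_comp_eq_id (Z := ModuleCat.of R R)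
    (a := fun l : Fin k => ModuleCat.ofHom (LinearMap.proj l ∘ₗ g))
    (b := fun l => ModuleCat.ofHom (f ∘ₗ LinearMap.single R (fun _ => R) l)) ?_ i
  ext x
  simpa [ModuleCat.hom_sum, LinearMap.sum_apply, ← map_sum, Finset.univ_sum_single] using
    LinearMap.congr_fun hfg x

theorem DepthGE.of_shortExact {d : ℕ} {S : ShortComplex (ModuleCat.{u} R)} (hS : S.ShortExact)
    (h₂ : DepthGE I d S.X₂) (h₁ : DepthGE I (d + 1) S.X₁) : DepthGE I d S.X₃ := by
  intro N hN hsupp i hi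
  have := h₂ N hN hsupp i hi
  have := h₁ N hN hsupp (i + 1) (by omega)
  refine subsingleton_of_forall_eq 0 fun x => ?_
  obtain ⟨y, rfl⟩ := Ext.covariant_sequence_exact₃ N hS x rfl (Subsingleton.elim _ _)
  rw [Subsingleton.elim y 0, Ext.zero_comp]

/-- The half of the Auslander–Buchsbaum formula that bounds depth from below. -/
theorem DepthGE.of_hasProjectiveDimensionLE [IsNoetherianRing R] {d p e : ℕ}
    (hR : DepthGE I e (ModuleCat.of R R)) (h : p + d ≤ e) (M : ModuleCat.{u} R) [Module.Finite R M]
    (hM : HasProjectiveDimensionLE M p) : DepthGE I d M := by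
  induction p generalizing d M with
  | zero =>
    have := (hasProjectiveDimensionLE_zero_iff M).1 hM
    exact (hR.mono (by omega)).of_projective M
  | succ p ih =>
    obtain ⟨k, π, hπ⟩ := Module.Finite.exists_fin' R M
    have hexact := LinearMap.exact_subtype_ker_map π
    have hinj := (LinearMap.ker π).injective_subtype
    have hker := (hasProjectiveDimensionLE_succ_iff hinj hexact hπ p).1 hM
    exact .of_shortExact (ModuleCat.shortComplex_shortExact
        (ModuleCat.shortComplexOfCompEqZero _ _ hexact.linearMap_comp_eq_zero) hexact hinj hπ)
      ((hR.mono (by omega)).of_projective (ModuleCat.of R (Fin k → R)))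
      (ih (by omega) (ModuleCat.of R (LinearMap.ker π)) hker)

theorem DepthGE.eq_zero_of_isPowTorsion {M : Type u} [AddCommGroup M] [Module R M]
    (hM : DepthGE I 1 (ModuleCat.of R M)) {x : M} (hx : IsPowTorsion I x) : x = 0 := by
  have := hM (ModuleCat.of R (Submodule.span R {x})) inferInstance hx.support_span_subset 0 one_pos
  have : Subsingleton (ModuleCat.of R (Submodule.span R {x}) ⟶ ModuleCat.of R M) :=
    Ext.addEquiv₀.symm.toEquiv.subsingleton
  have hzero := Subsingleton.elim (ModuleCat.ofHom (Submodule.span R {x}).subtype) 0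
  simpa using congrArg (fun φ => φ.hom ⟨x, Submodule.mem_span_singleton_self x⟩) hzero

theorem exists_lift_span_of_depthGE_two {A B D : Type u} [AddCommGroup A] [Module R A]
    [AddCommGroup B] [Module R B] [AddCommGroup D] [Module R D] {φ : A →ₗ[R] B} {ψ : B →ₗ[R] D}
    (hφ : Function.Injective φ) (hφψ : Function.Exact φ ψ) (hψ : Function.Surjective ψ)
    (hA : DepthGE I 2 (ModuleCat.of R A)) {q : D} (hq : IsPowTorsion I q) :
    ∃ σ : Submodule.span R {q} →ₗ[R] B, ψ ∘ₗ σ = (Submodule.span R {q}).subtype := by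
  have := hA (ModuleCat.of R (Submodule.span R {q})) inferInstance hq.support_span_subset 1
    one_lt_two
  have hS : (ModuleCat.shortComplexOfCompEqZero φ ψ hφψ.linearMap_comp_eq_zero).ShortExact :=
    ModuleCat.shortComplex_shortExact _ hφψ hφ hψ
  obtain ⟨y, hy⟩ := Ext.covariant_sequence_exact₃ _ hS
    (Ext.mk₀ (ModuleCat.ofHom (Submodule.span R {q}).subtype)) rfl
    (Subsingleton.elim (α := Ext _ (ModuleCat.of R A) 1) _ _)
  obtain ⟨σ, rfl⟩ := Ext.addEquiv₀.symm.surjective y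
  refine ⟨σ.hom, ?_⟩
  have hσ : σ ≫ ModuleCat.ofHom ψ = ModuleCat.ofHom (Submodule.span R {q}).subtype :=
    Ext.addEquiv₀.symm.injective ((Ext.mk₀_comp_mk₀ _ _).symm.trans hy)
  exact congrArg ModuleCat.Hom.hom hσ

theorem DepthGE.surjective_of_isPowTorsion_quotient {A B : Type u} [AddCommGroup A] [Module R A]
    [AddCommGroup B] [Module R B] {φ : A →ₗ[R] B} (hφ : Function.Injective φ)
    (hA : DepthGE I 2 (ModuleCat.of R A)) (hB : ∀ b : B, IsPowTorsion I b → b = 0)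
    (hq : ∀ b : B, IsPowTorsion I ((LinearMap.range φ).mkQ b)) : Function.Surjective φ := by
  intro b
  obtain ⟨σ, hσ⟩ := exists_lift_span_of_depthGE_two hφ φ.exact_map_mkQ_range
    (Submodule.mkQ_surjective _) hA (hq b)
  let q : Submodule.span R {(LinearMap.range φ).mkQ b} := ⟨_, Submodule.mem_span_singleton_self _⟩
  have hqt : IsPowTorsion I q := (hq b).trans (Ideal.radical_mono fun r hr => Subtype.ext hr)
  have hb : (LinearMap.range φ).mkQ (σ q) = (LinearMap.range φ).mkQ b := LinearMap.congr_fun hσ q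
  rw [hB _ (hqt.map σ), map_zero, eq_comm] at hb
  exact (Submodule.Quotient.mk_eq_zero _).1 hb

end Depth

section ExteriorPowers

variable {R M M' N : Type*} [CommRing R] [AddCommGroup M] [Module R M] [AddCommGroup M']
  [Module R M'] [AddCommGroup N] [Module R N] {p : ℕ} {g : M →ₗ[R] M'}

theorem alternatingMap_congr_of_forall_ker {ι : Type*} [Finite ι] {f : M [⋀^ι]→ₗ[R] N}
    (hf : ∀ m i, g (m i) = 0 → f m = 0) {m m' : ι → M} (h : ∀ i, g (m i) = g (m' i)) :
    f m = f m' := by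
  classical
  cases nonempty_fintype ι
  suffices ∀ s : Finset ι, f (s.piecewise m' m) = f m by
    rw [← this Finset.univ, Finset.piecewise_univ]
  intro s
  induction s using Finset.induction_on with
  | empty => simp
  | insert j s hj ih =>
    have hup : s.piecewise m' m = Function.update (s.piecewise m' m) j (m j) := by
      rw [eq_comm, Function.update_eq_self_iff, Finset.piecewise_eq_of_notMem _ _ _ hj]
    rw [Finset.piecewise_insert, ← ih, ← sub_eq_zero]
    conv_lhs => rw [hup, Function.update_idem, ← f.map_update_sub]
    exact hf _ j (by simp [h])

theorem exists_alternatingMap_comp_eq {ι : Type*} [Finite ι] (hg : Function.Surjective g)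
    {f : M [⋀^ι]→ₗ[R] N} (hf : ∀ m i, g (m i) = 0 → f m = 0) :
    ∃ f' : M' [⋀^ι]→ₗ[R] N, f'.compLinearMap g = f := by
  have hs := Function.surjInv_eq hg
  set s := Function.surjInv hg
  have hcongr {m m' : ι → M} := alternatingMap_congr_of_forall_ker hf (m := m) (m' := m')
  have hup [DecidableEq ι] (x : ι → M') (i : ι) (c : M') (d : M) (hd : g d = c) :
      f (s ∘ Function.update x i c) = f (Function.update (s ∘ x) i d) := by
    refine hcongr fun k => ?_
    obtain rfl | hk := eq_or_ne k i
    · simp [hs, hd]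
    · simp [hs, hk]
  refine ⟨{ toFun := fun x => f (s ∘ x)
            map_update_add' := fun x i a b => ?_
            map_update_smul' := fun x i r a => ?_
            map_eq_zero_of_eq' := fun x i j hij hne => f.map_eq_zero_of_eq _ (by simp [hij]) hne },
    AlternatingMap.ext fun m => hcongr fun i => hs _⟩
  · rw [hup x i _ (s a + s b) (by simp [hs]), f.map_update_add, hup x i _ (s a) (hs a),
      hup x i _ (s b) (hs b)]
  · rw [hup x i _ (r • s a) (by simp [hs]), f.map_update_smul, hup x i _ (s a) (hs a)]

theorem ker_exteriorPower_map_le (hg : Function.Surjective g) {K : Submodule R (⋀[R]^p M)}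
    (hK : ∀ m i, g (m i) = 0 → exteriorPower.ιMulti R p m ∈ K) :
    LinearMap.ker (exteriorPower.map p g) ≤ K := by
  obtain ⟨f, hf⟩ := exists_alternatingMap_comp_eq hg
    (f := K.mkQ.compAlternatingMap (exteriorPower.ιMulti R p))
    (fun m i hi => by simpa using hK m i hi)
  have hcomp : exteriorPower.alternatingMapLinearEquiv f ∘ₗ exteriorPower.map p g = K.mkQ := by
    refine exteriorPower.linearMap_ext (AlternatingMap.ext fun m => ?_)
    simpa [Function.comp_def] using DFunLike.congr_fun hf m
  rw [← K.ker_mkQ, ← hcomp]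
  exact LinearMap.ker_le_ker_comp _ _

theorem coe_exteriorPower_map (g : M →ₗ[R] M') (x : ⋀[R]^p M) :
    (exteriorPower.map p g x : ExteriorAlgebra R M') = ExteriorAlgebra.map g x := by
  have : (⋀[R]^p M').subtype ∘ₗ exteriorPower.map p g =
      (ExteriorAlgebra.map g).toLinearMap ∘ₗ (⋀[R]^p M).subtype := by
    refine exteriorPower.linearMap_ext (AlternatingMap.ext fun m => ?_)
    simp [ExteriorAlgebra.map_apply_ιMulti]
  exact LinearMap.congr_fun this x

/-- The map `v ∧ · : ⋀^p M → ⋀^(p+1) M`. -/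
def wedgeLeft (p : ℕ) (v : M) : ⋀[R]^p M →ₗ[R] ⋀[R]^(p + 1) M :=
  (LinearMap.mulLeft R (ExteriorAlgebra.ι R v)).restrict fun x hx => by
    rw [ExteriorAlgebra.exteriorPower, pow_succ']
    exact Submodule.mul_mem_mul (LinearMap.mem_range_self _ v) hx

theorem coe_wedgeLeft (v : M) (x : ⋀[R]^p M) :
    (wedgeLeft p v x : ExteriorAlgebra R M) = ExteriorAlgebra.ι R v * x := rfl

theorem wedgeLeft_ιMulti (v : M) (m : Fin p → M) :
    wedgeLeft p v (exteriorPower.ιMulti R p m) = exteriorPower.ιMulti R (p + 1) (Fin.cons v m) := by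
  ext
  simp [coe_wedgeLeft, ExteriorAlgebra.ιMulti_succ_apply, Matrix.vecTail, Function.comp_def]

theorem wedgeLeft_smul (r : R) (v : M) (x : ⋀[R]^p M) :
    wedgeLeft p (r • v) x = r • wedgeLeft p v x := by
  ext
  simp [coe_wedgeLeft]

theorem map_wedgeLeft (v : M) (x : ⋀[R]^p M) :
    exteriorPower.map (p + 1) g (wedgeLeft p v x) =
      wedgeLeft p (g v) (exteriorPower.map p g x) := by
  ext
  simp [coe_wedgeLeft, coe_exteriorPower_map]

theorem ιMulti_mem_range_wedgeLeft (m : Fin (p + 1) → M) (i : Fin (p + 1)) :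
    exteriorPower.ιMulti R (p + 1) m ∈ LinearMap.range (wedgeLeft (R := R) p (m i)) := by
  have hzero (m : Fin (p + 1) → M) :
      exteriorPower.ιMulti R (p + 1) m ∈ LinearMap.range (wedgeLeft (R := R) p (m 0)) :=
    ⟨exteriorPower.ιMulti R p (Fin.tail m), by rw [wedgeLeft_ιMulti, Fin.cons_self_tail]⟩
  obtain rfl | hi := eq_or_ne i 0
  · exact hzero m
  · have hswap := (exteriorPower.ιMulti R (p + 1)).map_swap m hi.symm
    have := hzero (m ∘ Equiv.swap 0 i)
    rwa [hswap, Submodule.neg_mem_iff, Function.comp_apply, Equiv.swap_apply_left] at this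

/-- Contraction against `τ` of an element annihilated by `v`, read modulo `v`. -/
theorem smul_map_eq_zero_of_wedgeLeft_eq_zero {v : M} (hv : g v = 0) {x : ⋀[R]^p M}
    (hx : wedgeLeft p v x = 0) (τ : M →ₗ[R] R) : τ v • exteriorPower.map p g x = 0 := by
  have hcontract := CliffordAlgebra.contractLeft_ι_mul (Q := (0 : QuadraticForm R M)) τ v
    (x : ExteriorAlgebra R M)
  have hx' : CliffordAlgebra.ι (0 : QuadraticForm R M) v * (x : ExteriorAlgebra R M) = 0 := by
    exact congrArg Subtype.val hx
  rw [hx', map_zero, eq_comm, sub_eq_zero] at hcontract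
  ext
  have := congrArg (ExteriorAlgebra.map g) hcontract
  rw [map_smul, map_mul] at this
  simpa [coe_exteriorPower_map, hv, ExteriorAlgebra.map_apply_ι] using this

variable {v : M} (hg : Function.Surjective g) (hv : LinearMap.ker g = Submodule.span R {v})
include hg hv

theorem ker_exteriorPower_map_le_ker_wedgeLeft :
    LinearMap.ker (exteriorPower.map p g) ≤ LinearMap.ker (wedgeLeft (R := R) p v) := by
  refine ker_exteriorPower_map_le hg fun m i hi => ?_
  obtain ⟨r, hr⟩ := Submodule.mem_span_singleton.1 (hv ▸ LinearMap.mem_ker.2 hi)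
  have hup : Fin.cons v m = Function.update (Fin.cons v m : Fin (p + 1) → M) i.succ (r • v) := by
    rw [hr, ← Fin.cons_update, Function.update_eq_self]
  rw [LinearMap.mem_ker, wedgeLeft_ιMulti, hup, AlternatingMap.map_update_smul,
    AlternatingMap.map_eq_zero_of_eq _ _ _ (Fin.succ_ne_zero i).symm, smul_zero]
  simp [Function.update_of_ne (Fin.succ_ne_zero i).symm]

theorem ker_exteriorPower_map_succ_eq_range_wedgeLeft :
    LinearMap.ker (exteriorPower.map (p + 1) g) = LinearMap.range (wedgeLeft (R := R) p v) := by
  refine le_antisymm (ker_exteriorPower_map_le hg fun m i hi => ?_) ?_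
  · obtain ⟨r, hr⟩ := Submodule.mem_span_singleton.1 (hv ▸ LinearMap.mem_ker.2 hi)
    obtain ⟨x, hx⟩ := ιMulti_mem_range_wedgeLeft (R := R) m i
    exact ⟨r • x, by rw [← hx, ← hr, wedgeLeft_smul, map_smul]⟩
  · rintro _ ⟨x, rfl⟩
    have hgv : g v = 0 := LinearMap.mem_ker.1 (hv ▸ Submodule.mem_span_singleton_self v)
    rw [LinearMap.mem_ker, map_wedgeLeft, hgv]
    ext
    simp [coe_wedgeLeft]

/-- The map `⋀^p (M / v) → ⋀^(p+1) M` induced by `v ∧ ·`, where the quotient is presented by a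
surjection `g : M → M'` with kernel spanned by `v`. -/
def wedgeLift (p : ℕ) : ⋀[R]^p M' →ₗ[R] ⋀[R]^(p + 1) M :=
  (LinearMap.ker (exteriorPower.map p g)).liftQ (wedgeLeft p v)
      (ker_exteriorPower_map_le_ker_wedgeLeft hg hv) ∘ₗ
    ((exteriorPower.map p g).quotKerEquivOfSurjective (exteriorPower.map_surjective hg)).symm

theorem wedgeLift_map (x : ⋀[R]^p M) :
    wedgeLift hg hv p (exteriorPower.map p g x) = wedgeLeft p v x := by
  have : ((exteriorPower.map p g).quotKerEquivOfSurjective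
      (exteriorPower.map_surjective hg)).symm (exteriorPower.map p g x) = Submodule.Quotient.mk x :=
    (LinearEquiv.symm_apply_eq _).2 rfl
  simp [wedgeLift, this]

theorem exact_wedgeLift_map :
    Function.Exact (wedgeLift hg hv p) (exteriorPower.map (p + 1) g) := by
  have hrange : LinearMap.range (wedgeLift hg hv p) = LinearMap.range (wedgeLeft (R := R) p v) := by
    rw [← LinearMap.range_comp_of_range_eq_top _
      (LinearMap.range_eq_top.2 (exteriorPower.map_surjective (n := p) hg))]
    exact congrArg LinearMap.range (LinearMap.ext (wedgeLift_map hg hv))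
  rw [LinearMap.exact_iff, hrange, ker_exteriorPower_map_succ_eq_range_wedgeLeft hg hv]

theorem smul_eq_zero_of_wedgeLift_eq_zero {y : ⋀[R]^p M'} (hy : wedgeLift hg hv p y = 0)
    (τ : M →ₗ[R] R) : τ v • y = 0 := by
  obtain ⟨x, rfl⟩ := exteriorPower.map_surjective hg y
  rw [wedgeLift_map] at hy
  exact smul_map_eq_zero_of_wedgeLeft_eq_zero
    (LinearMap.mem_ker.1 (hv ▸ Submodule.mem_span_singleton_self v)) hy τ

end ExteriorPowers

section TameModules

open CategoryTheory

universe u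

variable {R : Type u} [CommRing R] {I : Ideal R}

theorem projective_exteriorPower (M : Type*) [AddCommGroup M] [Module R M] [Module.Finite R M]
    [Module.Projective R M] (p : ℕ) : Module.Projective R (⋀[R]^p M) := by
  obtain ⟨k, f, g, -, -, hfg⟩ := Module.Finite.exists_comp_eq_id_of_projective R M
  exact Module.Projective.of_split (exteriorPower.map p g) (exteriorPower.map p f)
    (by rw [← exteriorPower.map_comp, hfg, exteriorPower.map_id])

theorem hasProjectiveDimensionLE_of_projective (M : Type u) [AddCommGroup M] [Module R M]
    [Module.Projective R M] (p : ℕ) : HasProjectiveDimensionLE (ModuleCat.of R M) p :=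
  have := (hasProjectiveDimensionLE_zero_iff (ModuleCat.of R M)).2 inferInstance
  hasProjectiveDimensionLT_of_ge _ 1 (p + 1) (by omega)

variable (R) in
/-- The exterior powers `⋀^p M`, `p ≤ n`, have projective dimension at most `p`. For `M` the dual of
the module of logarithmic derivations in `n` variables this is tameness of the arrangement. -/
def IsTameUpTo (n : ℕ) (M : Type u) [AddCommGroup M] [Module R M] : Prop :=
  ∀ p ≤ n, HasProjectiveDimensionLE (ModuleCat.of R (⋀[R]^p M)) p

theorem isTameUpTo_of_projective (n : ℕ) (M : Type u) [AddCommGroup M] [Module R M]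
    [Module.Finite R M] [Module.Projective R M] : IsTameUpTo R n M := fun p _ =>
  have := projective_exteriorPower (R := R) M p
  hasProjectiveDimensionLE_of_projective _ p

theorem IsTameUpTo.of_linearEquiv {n : ℕ} {M M' : Type u} [AddCommGroup M] [Module R M]
    [AddCommGroup M'] [Module R M'] (hM : IsTameUpTo R n M) (e : M ≃ₗ[R] M') :
    IsTameUpTo R n M' := fun p hp =>
  have : HasProjectiveDimensionLT
      ((ModuleCat.exteriorPower.functor R p).obj (ModuleCat.of R M)) (p + 1) := hM p hp
  hasProjectiveDimensionLT_of_iso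
    ((ModuleCat.exteriorPower.functor R p).mapIso e.toModuleIso) (p + 1)

theorem wedgeLift_injective {M M' : Type u} [AddCommGroup M] [Module R M] [AddCommGroup M']
    [Module R M'] {g : M →ₗ[R] M'} (hg : Function.Surjective g) {v : M}
    (hv : LinearMap.ker g = Submodule.span R {v})
    (hI : I ≤ Ideal.radical (LinearMap.range (Module.Dual.eval R M v))) {p : ℕ}
    (hdepth : DepthGE I 1 (ModuleCat.of R (⋀[R]^p M'))) :
    Function.Injective (wedgeLift hg hv p) := by
  rw [injective_iff_map_eq_zero]
  refine fun y hy => hdepth.eq_zero_of_isPowTorsion (hI.trans (Ideal.radical_mono ?_))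
  rintro _ ⟨τ, rfl⟩
  exact smul_eq_zero_of_wedgeLift_eq_zero hg hv hy τ

theorem IsTameUpTo.of_ker_eq_span_singleton [IsNoetherianRing R] {n : ℕ}
    (hR : DepthGE I n (ModuleCat.of R R)) {M M' : Type u} [AddCommGroup M] [Module R M]
    [AddCommGroup M'] [Module R M'] [Module.Finite R M'] (hM : IsTameUpTo R n M) {g : M →ₗ[R] M'}
    (hg : Function.Surjective g) {v : M} (hv : LinearMap.ker g = Submodule.span R {v})
    (hI : I ≤ Ideal.radical (LinearMap.range (Module.Dual.eval R M v))) :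
    IsTameUpTo R n M' := by
  intro p hp
  induction p with
  | zero =>
    rw [hasProjectiveDimensionLE_zero_iff]
    exact Module.Projective.of_equiv (exteriorPower.zeroEquiv R M').symm
  | succ p ih =>
    have hpd := ih (by omega)
    have hinj := wedgeLift_injective hg hv hI (hR.of_hasProjectiveDimensionLE hp _ hpd)
    have hexact := exact_wedgeLift_map (p := p) hg hv
    have hS : (ModuleCat.shortComplexOfCompEqZero _ _ hexact.linearMap_comp_eq_zero).ShortExact :=
      ModuleCat.shortComplex_shortExact _ hexact hinj (exteriorPower.map_surjective hg)
    exact hS.hasProjectiveDimensionLT_X₃ (p + 1) hpd (hM _ hp)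

theorem IsTameUpTo.of_ker_eq_span_range [IsNoetherianRing R] {n : ℕ}
    (hR : DepthGE I n (ModuleCat.of R R)) {G M : Type u} [AddCommGroup G] [Module R G]
    [Module.Finite R G] [AddCommGroup M] [Module R M] (hG : IsTameUpTo R n G) {k : ℕ}
    {v : Fin k → G} {π : G →ₗ[R] M} (hπ : Function.Surjective π)
    (hv : LinearMap.ker π = Submodule.span R (Set.range v))
    (hI : ∀ x ∈ I, ∃ (N : ℕ) (τ : Fin k → Module.Dual R G),
      ∀ j l, τ j (v l) = if j = l then x ^ N else 0) :
    IsTameUpTo R n M := by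
  induction k generalizing M with
  | zero =>
    have hker : LinearMap.ker π = ⊥ := by simp [hv]
    exact hG.of_linearEquiv (.ofBijective π ⟨LinearMap.ker_eq_bot.1 hker, hπ⟩)
  | succ k ih =>
    let U := Submodule.span R (Set.range fun l : Fin k => v l.castSucc)
    have hUπ : U ≤ LinearMap.ker π :=
      hv ▸ Submodule.span_mono (Set.range_comp_subset_range Fin.castSucc v)
    have hU : IsTameUpTo R n (G ⧸ U) := by
      refine ih U.mkQ_surjective U.ker_mkQ fun x hx => ?_
      obtain ⟨N, τ, hτ⟩ := hI x hx
      exact ⟨N, fun j => τ j.castSucc, fun j l => by simp [hτ]⟩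
    have := Module.Finite.of_surjective π hπ
    refine hU.of_ker_eq_span_singleton hR (g := U.liftQ π hUπ) (v := U.mkQ (v (Fin.last k)))
      (.of_comp (g := U.mkQ) hπ) ?_ fun x hx => ?_
    · have hspan : LinearMap.ker π = Submodule.span R {v (Fin.last k)} ⊔ U := by
        rw [hv, ← Fin.snoc_init_self v, Fin.range_snoc, Submodule.span_insert]
        simp [U, Fin.init_def]
      rw [Submodule.ker_liftQ, hspan, Submodule.map_sup, Submodule.mkQ_map_self, sup_bot_eq,
        Submodule.map_span, Set.image_singleton]
    · obtain ⟨N, τ, hτ⟩ := hI x hx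
      refine ⟨N, U.liftQ (τ (Fin.last k)) (Submodule.span_le.2 ?_), by simp [hτ]⟩
      rintro _ ⟨l, rfl⟩
      simp [hτ, (Fin.castSucc_lt_last l).ne']

end TameModules

section SplittingIdeal

open CategoryTheory

universe u

variable {R : Type u} [CommRing R] {I : Ideal R}

/-- The elements `r` such that `r • id` factors through `φ`; its zero locus is the set of points
of `Spec R` near which `φ` is not a split surjection. -/
def splittingIdeal {G F : Type*} [AddCommGroup G] [Module R G] [AddCommGroup F] [Module R F]
    (φ : G →ₗ[R] F) : Ideal R where
  carrier := {r | ∃ s : F →ₗ[R] G, φ ∘ₗ s = r • LinearMap.id}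
  zero_mem' := ⟨0, by simp⟩
  add_mem' := by
    rintro a b ⟨s, hs⟩ ⟨t, ht⟩
    exact ⟨s + t, by rw [LinearMap.comp_add, hs, ht, add_smul]⟩
  smul_mem' := by
    rintro c a ⟨s, hs⟩
    exact ⟨c • s, by rw [LinearMap.comp_smul, hs, smul_smul, smul_eq_mul]⟩

theorem isTameUpTo_quotient_range_dualMap [Nontrivial R] [IsNoetherianRing R] {n : ℕ}
    (hR : DepthGE I n (ModuleCat.of R R)) {F G : Type u} [AddCommGroup F] [Module R F]
    [Module.Free R F] [Module.Finite R F] [AddCommGroup G] [Module R G] [Module.Projective R G]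
    [Module.Finite R G] {φ : G →ₗ[R] F} (hI : I ≤ (splittingIdeal φ).radical) :
    IsTameUpTo R n (Module.Dual R G ⧸ LinearMap.range φ.dualMap) := by
  let b := Module.finBasis R F
  have hspan : LinearMap.range φ.dualMap =
      Submodule.span R (Set.range fun l => φ.dualMap (b.dualBasis l)) := by
    rw [LinearMap.range_eq_map, ← b.dualBasis.span_eq, Submodule.map_span, ← Set.range_comp]
    rfl
  refine (isTameUpTo_of_projective n (Module.Dual R G)).of_ker_eq_span_range hR
    (Submodule.mkQ_surjective _) ((Submodule.ker_mkQ _).trans hspan) fun x hx => ?_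
  obtain ⟨N, s, hs⟩ := hI hx
  refine ⟨N, fun j => Module.Dual.eval R G (s (b j)), fun j l => ?_⟩
  have hsj : φ (s (b j)) = x ^ N • b j := LinearMap.congr_fun hs (b j)
  simp [hsj, Finsupp.single_apply]

section DualKer

variable {F G : Type*} [AddCommGroup F] [Module R F] [AddCommGroup G] [Module R G] {φ : G →ₗ[R] F}

/-- Restriction of linear forms `coker (φ^*) → (ker φ)^*`. -/
def cokerDualMapRestrict (φ : G →ₗ[R] F) :
    (Module.Dual R G ⧸ LinearMap.range φ.dualMap) →ₗ[R] Module.Dual R (LinearMap.ker φ) :=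
  (LinearMap.range φ.dualMap).liftQ (LinearMap.ker φ).dualRestrict <| by
    rintro _ ⟨α, rfl⟩
    ext w
    simp

theorem exists_of_mem_splittingIdeal {r : R} (hr : r ∈ splittingIdeal φ) :
    ∃ (s : F →ₗ[R] G) (L : G →ₗ[R] LinearMap.ker φ), ∀ g, (L g : G) = r • g - s (φ g) := by
  obtain ⟨s, hs⟩ := hr
  refine ⟨s, LinearMap.codRestrict _ (r • LinearMap.id - s ∘ₗ φ) fun g => ?_, fun g => rfl⟩
  simpa [sub_eq_zero] using (LinearMap.congr_fun hs (φ g)).symm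

theorem smul_eq_zero_of_cokerDualMapRestrict_eq_zero {r : R} (hr : r ∈ splittingIdeal φ)
    {a : Module.Dual R G ⧸ LinearMap.range φ.dualMap} (ha : cokerDualMapRestrict φ a = 0) :
    r • a = 0 := by
  obtain ⟨α, rfl⟩ := Submodule.mkQ_surjective _ a
  obtain ⟨s, L, hL⟩ := exists_of_mem_splittingIdeal hr
  rw [← map_smul, ← LinearMap.mem_ker, Submodule.ker_mkQ]
  refine ⟨α ∘ₗ s, LinearMap.ext fun g => ?_⟩
  have hα : α (L g) = 0 := LinearMap.congr_fun ha (L g)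
  rw [hL, map_sub, sub_eq_zero] at hα
  simpa using hα.symm

theorem smul_mem_range_cokerDualMapRestrict {r : R} (hr : r ∈ splittingIdeal φ)
    (ξ : Module.Dual R (LinearMap.ker φ)) : r • ξ ∈ LinearMap.range (cokerDualMapRestrict φ) := by
  obtain ⟨s, L, hL⟩ := exists_of_mem_splittingIdeal hr
  refine ⟨Submodule.Quotient.mk (ξ ∘ₗ L), LinearMap.ext fun w => ?_⟩
  have hw : L w = r • w := Subtype.ext (by simp [hL])
  simp [cokerDualMapRestrict, hw]

end DualKer

theorem IsPowTorsion.dual_eq_zero (hR : DepthGE I 1 (ModuleCat.of R R)) {M : Type*}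
    [AddCommGroup M] [Module R M] {ξ : Module.Dual R M} (hξ : IsPowTorsion I ξ) : ξ = 0 :=
  LinearMap.ext fun w => hR.eq_zero_of_isPowTorsion (hξ.map (Module.Dual.eval R M w))

theorem cokerDualMapRestrict_bijective [IsNoetherianRing R] (hR : DepthGE I 1 (ModuleCat.of R R))
    {F G : Type u} [AddCommGroup F] [Module R F] [AddCommGroup G] [Module R G] {φ : G →ₗ[R] F}
    (hI : I ≤ (splittingIdeal φ).radical)
    (hdepth : DepthGE I 2 (ModuleCat.of R (Module.Dual R G ⧸ LinearMap.range φ.dualMap))) :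
    Function.Bijective (cokerDualMapRestrict φ) := by
  have hinj : Function.Injective (cokerDualMapRestrict φ) := by
    rw [injective_iff_map_eq_zero]
    exact fun a ha => (hdepth.mono one_le_two).eq_zero_of_isPowTorsion <|
      hI.trans (Ideal.radical_mono fun r hr => smul_eq_zero_of_cokerDualMapRestrict_eq_zero hr ha)
  refine ⟨hinj, hdepth.surjective_of_isPowTorsion_quotient hinj
    (fun ξ hξ => hξ.dual_eq_zero hR) fun ξ => hI.trans (Ideal.radical_mono fun r hr => ?_)⟩
  exact (Submodule.Quotient.mk_eq_zero _).2 (smul_mem_range_cokerDualMapRestrict hr ξ)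

theorem isTameUpTo_dual_ker [Nontrivial R] [IsNoetherianRing R] {n : ℕ}
    (hR : DepthGE I n (ModuleCat.of R R)) (hn : 3 ≤ n) {F G : Type u}
    [AddCommGroup F] [Module R F] [Module.Free R F] [Module.Finite R F]
    [AddCommGroup G] [Module R G] [Module.Projective R G] [Module.Finite R G] {φ : G →ₗ[R] F}
    (hI : I ≤ (splittingIdeal φ).radical) :
    IsTameUpTo R n (Module.Dual R (LinearMap.ker φ)) := by
  have htame := isTameUpTo_quotient_range_dualMap hR hI
  have := htame 1 (by omega)
  have hpd : HasProjectiveDimensionLE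
      (ModuleCat.of R (Module.Dual R G ⧸ LinearMap.range φ.dualMap)) 1 :=
    hasProjectiveDimensionLT_of_iso (exteriorPower.oneEquiv R _).toModuleIso 2
  have hbij := cokerDualMapRestrict_bijective (hR.mono (by omega)) hI
    (hR.of_hasProjectiveDimensionLE (p := 1) (by omega) _ hpd)
  exact htame.of_linearEquiv (.ofBijective _ hbij)

end SplittingIdeal

section SmallProjectiveDimension

open CategoryTheory

universe u

variable {R : Type u} [CommRing R] {F G : Type u} [AddCommGroup F] [Module R F]
  [Module.Projective R F] [AddCommGroup G] [Module R G] [Module.Projective R G]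

theorem projective_ker_of_hasProjectiveDimensionLE_two
    (hR : ∀ M : ModuleCat.{u} R, HasProjectiveDimensionLE M 2) (φ : G →ₗ[R] F) :
    Module.Projective R (LinearMap.ker φ) := by
  have hrange : HasProjectiveDimensionLE (ModuleCat.of R (LinearMap.range φ)) 1 :=
    (hasProjectiveDimensionLE_succ_iff (LinearMap.range φ).injective_subtype
      (LinearMap.exact_subtype_mkQ _) (Submodule.mkQ_surjective _) 1).1 (hR _)
  have hexact : Function.Exact (LinearMap.ker φ).subtype φ.rangeRestrict := by
    rw [← φ.ker_rangeRestrict]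
    exact LinearMap.exact_subtype_ker_map _
  exact (hasProjectiveDimensionLE_zero_iff _).1 ((hasProjectiveDimensionLE_succ_iff
    (LinearMap.ker φ).injective_subtype hexact φ.surjective_rangeRestrict 0).1 hrange)

theorem isTameUpTo_dual_ker_of_hasProjectiveDimensionLE_two [IsNoetherianRing R] [Module.Finite R G]
    (hR : ∀ M : ModuleCat.{u} R, HasProjectiveDimensionLE M 2) (φ : G →ₗ[R] F) (n : ℕ) :
    IsTameUpTo R n (Module.Dual R (LinearMap.ker φ)) :=
  have := projective_ker_of_hasProjectiveDimensionLE_two hR φ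
  isTameUpTo_of_projective n _

end SmallProjectiveDimension

section Variables

variable {n : ℕ} {R : Type*} [CommRing R]

theorem ofList_take_ofFn_X (i : ℕ) :
    Ideal.ofList ((List.ofFn (X : Fin n → MvPolynomial (Fin n) R)).take i) =
      Ideal.span (X '' {j : Fin n | (j : ℕ) < i}) := by
  refine congrArg Ideal.span (Set.ext fun r => ?_)
  simp only [Set.mem_ofPred_eq, Set.mem_image, List.mem_iff_getElem, List.getElem_take,
    List.getElem_ofFn, List.length_take, List.length_ofFn, lt_inf_iff]
  exact ⟨fun ⟨k, hk, hr⟩ => ⟨⟨k, hk.2⟩, hk.1, hr⟩, fun ⟨j, hj, hr⟩ => ⟨j, ⟨hj, j.2⟩, hr⟩⟩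

theorem mem_span_image_X_of_X_mul_mem {σ : Type*} {s : Set σ} {i : σ} (hi : i ∉ s)
    {p : MvPolynomial σ R} (hp : X i * p ∈ Ideal.span (X '' s)) : p ∈ Ideal.span (X '' s) := by
  rw [mem_ideal_span_X_image] at hp ⊢
  intro m hm
  obtain ⟨j, hj, hmj⟩ := hp (Finsupp.single i 1 + m) (by simpa [coeff_X_mul] using hm)
  have hij : i ≠ j := fun h => hi (h ▸ hj)
  exact ⟨j, hj, by simpa [Finsupp.single_apply, hij] using hmj⟩

theorem span_range_X_ne_top {σ : Type*} [Nontrivial R] :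
    Ideal.span (Set.range (X : σ → MvPolynomial σ R)) ≠ ⊤ := by
  rw [Ne, Ideal.eq_top_iff_one, ← Set.image_univ, mem_ideal_span_X_image]
  simp

theorem isRegular_ofFn_X [Nontrivial R] :
    RingTheory.Sequence.IsRegular (MvPolynomial (Fin n) R)
      (List.ofFn (X : Fin n → MvPolynomial (Fin n) R)) := by
  refine ⟨⟨fun i h => ?_⟩, ?_⟩
  · rw [isSMulRegular_iff_right_eq_zero_of_smul]
    intro y hy
    obtain ⟨p, rfl⟩ := Submodule.Quotient.mk_surjective _ y
    rw [← Submodule.Quotient.mk_smul, Submodule.Quotient.mk_eq_zero] at hy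
    rw [Submodule.Quotient.mk_eq_zero]
    rw [ofList_take_ofFn_X, smul_eq_mul, Ideal.mul_top] at hy ⊢
    rw [List.getElem_ofFn, smul_eq_mul] at hy
    exact mem_span_image_X_of_X_mul_mem (by simp) hy
  · rw [smul_eq_mul, Ideal.mul_top]
    have hX : {p | p ∈ List.ofFn (X : Fin n → MvPolynomial (Fin n) R)} = Set.range X := by
      ext
      simp
    rw [Ideal.ofList, hX]
    exact span_range_X_ne_top.symm

end Variables

section Jacobian

theorem exists_mem_splittingIdeal_eval_eq_one {σ ι κ K : Type*} [CommRing K] [Finite ι]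
    [Fintype κ] {A : Matrix ι κ (MvPolynomial σ K)} {p : σ → K}
    (hA : Function.Surjective (A.map (eval p)).mulVec) :
    ∃ r ∈ splittingIdeal A.mulVecLin, eval p r = 1 := by
  classical
  cases nonempty_fintype ι
  obtain ⟨B, hB⟩ := Matrix.mulVec_surjective_iff_exists_right_inverse.1 hA
  let B' : Matrix κ ι (MvPolynomial σ K) := B.map C
  have hB' : B'.map (eval p) = B := by
    ext
    simp [B']
  refine ⟨(A * B').det, ⟨(B' * (A * B').adjugate).mulVecLin, ?_⟩, ?_⟩
  · rw [← Matrix.mulVecLin_mul, ← Matrix.mul_assoc, Matrix.mul_adjugate]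
    ext
    simp
  · rw [RingHom.map_det, RingHom.mapMatrix_apply, Matrix.map_mul, hB', hB, Matrix.det_one]

theorem span_range_X_le_radical_splittingIdeal {σ ι κ K : Type*} [Field K] [IsAlgClosed K]
    [Finite σ] [Finite ι] [Fintype κ] {A : Matrix ι κ (MvPolynomial σ K)}
    (hA : ∀ p ≠ 0, Function.Surjective (A.map (eval p)).mulVec) :
    Ideal.span (Set.range X) ≤ (splittingIdeal A.mulVecLin).radical := by
  rw [Ideal.span_le, Set.range_subset_iff]
  intro i
  rw [SetLike.mem_coe, ← vanishingIdeal_zeroLocus_eq_radical (K := K), mem_vanishingIdeal_iff]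
  intro p hp
  have hp0 : p = 0 := by
    by_contra hp0
    obtain ⟨r, hr, hrp⟩ := exists_mem_splittingIdeal_eval_eq_one (hA p hp0)
    rw [mem_zeroLocus_iff] at hp
    exact one_ne_zero (hrp.symm.trans (hp r hr))
  simp [hp0]

theorem mulVec_surjective_of_rank_eq_card {ι κ K : Type*} [Field K] [Fintype ι] [Fintype κ]
    {A : Matrix ι κ K} (hA : A.rank = Fintype.card ι) : Function.Surjective A.mulVec :=
  (LinearMap.range_eq_top (f := A.mulVecLin)).1 <|
    Submodule.eq_top_of_finrank_eq (hA.trans (Module.finrank_fintype_fun_eq_card K).symm)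

theorem sum_eval_pderiv_mul_eq_zero {σ R : Type*} [CommSemiring R] [Fintype σ] {d : ℕ}
    {g : MvPolynomial σ R} (hg : g.IsHomogeneous d) {p : σ → R} (hp : eval p g = 0) :
    ∑ j, eval p (pderiv j g) * p j = 0 := by
  simpa [hp, mul_comm] using congrArg (eval p) hg.sum_X_mul_pderiv

variable {n m : ℕ} {f : Fin m → Rp n}

theorem SNC.card_le_of_eval_eq_zero {d : Fin m → ℕ} (hf : SNC n m f)
    (hfh : ∀ i, (f i).IsHomogeneous (d i)) {p : Fin n → ℂ} (hp : p ≠ 0) {I : Finset (Fin m)}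
    (hI : ∀ i ∈ I, eval p (f i) = 0) : I.card ≤ n := by
  by_contra! hlt
  obtain ⟨J, hJI, hJ⟩ := Finset.exists_subset_card_eq hlt.le
  have hn : n ≠ 0 := by
    rintro rfl
    exact hp (Subsingleton.elim _ _)
  have hJp : ∀ i ∈ J, eval p (f i) = 0 := fun i hi => hI i (hJI hi)
  have hrank := hf.2 J (by omega) (by omega) p hp hJp
  set A := Matrix.of fun (i : J) (j : Fin n) => eval p (pderiv j (f i))
  have hinj : Function.Injective A.mulVecLin :=
    (LinearMap.injective_iff_surjective_of_finrank_eq_finrank (by simp [hJ])).2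
      (mulVec_surjective_of_rank_eq_card (hrank.trans (Fintype.card_coe J).symm))
  refine hp (hinj ?_)
  rw [map_zero]
  exact funext fun i => sum_eval_pderiv_mul_eq_zero (hfh i) (hJp i i.2)

theorem SNC.exists_sum_eval_pderiv_mul_eq {d : Fin m → ℕ} (hf : SNC n m f)
    (hfh : ∀ i, (f i).IsHomogeneous (d i)) {p : Fin n → ℂ} (hp : p ≠ 0) (y : Fin m → ℂ) :
    ∃ θ : Fin n → ℂ, ∀ i, eval p (f i) = 0 → ∑ j, eval p (pderiv j (f i)) * θ j = y i := by
  let I : Finset (Fin m) := {i | eval p (f i) = 0}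
  have hI : ∀ i ∈ I, eval p (f i) = 0 := fun i hi => (Finset.mem_filter.1 hi).2
  rcases I.eq_empty_or_nonempty with hempty | hne
  · exact ⟨0, fun i hi => (Finset.filter_eq_empty_iff.1 hempty (Finset.mem_univ i) hi).elim⟩
  · have hrank := hf.2 I hne.card_pos (hf.card_le_of_eval_eq_zero hfh hp hI) p hp hI
    obtain ⟨θ, hθ⟩ := mulVec_surjective_of_rank_eq_card
      (hrank.trans (Fintype.card_coe I).symm) fun i => y i
    exact ⟨θ, fun i hi => congrFun hθ ⟨i, by simpa [I] using hi⟩⟩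

theorem map_Qmat_mulVec {S : Type*} [CommRing S] (φ : Rp n →+* S) (w : Fin m ⊕ Fin n → S)
    (i : Fin m) : ((Qmat n m f).map φ).mulVec w i =
      φ (f i) * w (.inl i) + ∑ j, φ (pderiv j (f i)) * w (.inr j) := by
  simp [Matrix.mulVec, dotProduct, Qmat, apply_ite φ]

theorem mem_ker_mulVecLin_Qmat {w : Fin m ⊕ Fin n → Rp n} :
    w ∈ LinearMap.ker (Qmat n m f).mulVecLin ↔
      ∀ i, f i * w (.inl i) + ∑ j, pderiv j (f i) * w (.inr j) = 0 := by
  rw [LinearMap.mem_ker, Matrix.mulVecLin_apply, funext_iff]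
  exact forall_congr' fun i => iff_of_eq (congrArg (· = 0) (map_Qmat_mulVec (.id _) w i))

theorem SNC.mulVec_map_Qmat_surjective {d : Fin m → ℕ} (hf : SNC n m f)
    (hfh : ∀ i, (f i).IsHomogeneous (d i)) {p : Fin n → ℂ} (hp : p ≠ 0) :
    Function.Surjective ((Qmat n m f).map (eval p)).mulVec := by
  intro y
  obtain ⟨θ, hθ⟩ := hf.exists_sum_eval_pderiv_mul_eq hfh hp y
  refine ⟨Sum.elim (fun i => (y i - ∑ j, eval p (pderiv j (f i)) * θ j) / eval p (f i)) θ,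
    funext fun i => ?_⟩
  rw [map_Qmat_mulVec, Sum.elim_inl]
  simp only [Sum.elim_inr]
  by_cases hi : eval p (f i) = 0
  · rw [hi, zero_mul, zero_add, hθ i hi]
  · rw [mul_div_cancel₀ _ hi, sub_add_cancel]

end Jacobian

section Tameness

open CategoryTheory

variable {n m : ℕ} {f : Fin m → Rp n}

variable (f) in
/-- The projection `ker Q → Der(A)` onto the last `n` coordinates. -/
def kerToDerA : LinearMap.ker (Qmat n m f).mulVecLin →ₗ[Rp n] DerA n m f :=
  LinearMap.restrict (LinearMap.funLeft (Rp n) (Rp n) Sum.inr) fun w hw i => by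
    have h := mem_ker_mulVecLin_Qmat.1 hw i
    refine ⟨-w (.inl i), ?_⟩
    simp only [LinearMap.funLeft_apply, mul_comm (w (.inr _))]
    linear_combination h

theorem kerToDerA_bijective (hf : ∀ i, f i ≠ 0) : Function.Bijective (kerToDerA f) := by
  constructor
  · rw [injective_iff_map_eq_zero]
    rintro ⟨w, hw⟩ hzero
    have hr (j : Fin n) : w (.inr j) = 0 := congrFun (congrArg Subtype.val hzero) j
    have hl (i : Fin m) : w (.inl i) = 0 := by
      simpa [hr, hf i] using mem_ker_mulVecLin_Qmat.1 hw i
    exact Subtype.ext (funext (Sum.rec hl hr))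
  · rintro ⟨θ, hθ⟩
    choose a ha using fun i => hθ i
    refine ⟨⟨Sum.elim (-a) θ, mem_ker_mulVecLin_Qmat.2 fun i => ?_⟩, rfl⟩
    simp [mul_comm, ← ha]

theorem isTameUpTo_dual_ker_Qmat {d : Fin m → ℕ} (hfh : ∀ i, (f i).IsHomogeneous (d i))
    (hf : SNC n m f) :
    IsTameUpTo (Rp n) n (Module.Dual (Rp n) (LinearMap.ker (Qmat n m f).mulVecLin)) := by
  rcases le_or_gt n 2 with hn | hn
  · exact isTameUpTo_dual_ker_of_hasProjectiveDimensionLE_two (fun M =>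
      have := hasProjectiveDimensionLE_mvPolynomial ℂ n M
      hasProjectiveDimensionLT_of_ge M (n + 1) 3 (by omega)) _ n
  · have hdepth : DepthGE (Ideal.span (Set.range X)) n (ModuleCat.of (Rp n) (Rp n)) := by
      simpa using depthGE_self span_range_X_ne_top
        (fun r hr => Ideal.subset_span (by simpa using hr)) (isRegular_ofFn_X (n := n) (R := ℂ))
    exact isTameUpTo_dual_ker hdepth hn
      (span_range_X_le_radical_splittingIdeal fun p hp => hf.mulVec_map_Qmat_surjective hfh hp)

theorem hasProjectiveDimensionLE_exteriorPower_dual_DerA {d : Fin m → ℕ}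
    (hfh : ∀ i, (f i).IsHomogeneous (d i)) (hf : SNC n m f) (p : ℕ) :
    HasProjectiveDimensionLE
      (ModuleCat.of (Rp n) (⋀[Rp n]^p (Module.Dual (Rp n) (DerA n m f)))) p := by
  rcases le_or_gt p n with hp | hp
  · let e : LinearMap.ker (Qmat n m f).mulVecLin ≃ₗ[Rp n] DerA n m f :=
      .ofBijective (kerToDerA f) (kerToDerA_bijective fun i => (hf.1 i).ne_zero)
    exact (isTameUpTo_dual_ker_Qmat hfh hf).of_linearEquiv e.symm.dualMap p hp
  · have := hasProjectiveDimensionLE_mvPolynomial ℂ n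
      (ModuleCat.of (Rp n) (⋀[Rp n]^p (Module.Dual (Rp n) (DerA n m f))))
    exact hasProjectiveDimensionLT_of_ge _ (n + 1) (p + 1) (by omega)

end Tameness

theorem snc_is_tame_general (n m : ℕ) (f : Fin m → Rp n) (d : Fin m → ℕ)
    (hfh : ∀ i, (f i).IsHomogeneous (d i)) (hsnc : SNC n m f) (p : ℕ) :
    ∃ P : CategoryTheory.ProjectiveResolution
        (ModuleCat.of (Rp n) (↥(⋀[Rp n]^p (Module.Dual (Rp n) ↥(DerA n m f))))),
      ∀ k : ℕ, p < k → CategoryTheory.Limits.IsZero (P.complex.X k) :=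
  exists_projectiveResolution_of_hasProjectiveDimensionLE p _
    (hasProjectiveDimensionLE_exteriorPower_dual_DerA hfh hsnc p)

/-- Every SNC arrangement is tame: `Ω^p = ⋀^p Hom(Der(A), R)` has
projective dimension at most `p` for `0 ≤ p ≤ n`. -/
theorem snc_is_tame (n m : ℕ) (hn : 2 ≤ n) (hm : n + 1 ≤ m)
    (f : Fin m → Rp n) (d : Fin m → ℕ)
    (hf0 : ∀ i, f i ≠ 0) (hfh : ∀ i, (f i).IsHomogeneous (d i)) (hd : ∀ i, 1 ≤ d i)
    (hsnc : SNC n m f) :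
    ∀ p : ℕ, p ≤ n →
      ∃ P : CategoryTheory.ProjectiveResolution
          (ModuleCat.of (Rp n)
            (↥(⋀[Rp n]^p (Module.Dual (Rp n) ↥(DerA n m f))))),
        ∀ k : ℕ, p < k → CategoryTheory.Limits.IsZero (P.complex.X k) :=
  fun p _ => snc_is_tame_general n m f d hfh hsnc p
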